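/- arXiv:1003.4337 — 8 statements merged into one kernel-verified Lean document; each statement's English description precedes it below -/
import Mathlib

section
/- Let d ≥ 2 and let F be the flip operator on ℂ^d ⊗ ℂ^d (the matrix of order d² with entries F_{(i,j),(k,l)} = δ_{i,l} δ_{j,k}). For t ∈ [−1, 1], the (non-normalized) Werner state ρ_W(t) = I − t F is separable if and only if t ≤ 1/d. -/
open Matrix Kronecker

/-- The flip operator `F` on `ℂ^d ⊗ ℂ^d`, with entries `F_{(i,j),(k,l)} = δ_{i,l} δ_{j,k}`. -/
noncomputable def flipOp (d : ℕ) : Matrix (Fin d × Fin d) (Fin d × Fin d) ℂ :=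
  Matrix.of fun p q => if p.1 = q.2 ∧ p.2 = q.1 then 1 else 0

/-- A Hermitian matrix of order `d²` acting on `ℂ^d ⊗ ℂ^d` is separable if it is a finite
sum `∑ m, p m • (a m a m†) ⊗ (b m b m†)` with `p m ≥ 0`. -/
def SeparableState {d : ℕ} (ρ : Matrix (Fin d × Fin d) (Fin d × Fin d) ℂ) : Prop :=
  ∃ (m : ℕ) (p : Fin m → ℝ) (a b : Fin m → Fin d → ℂ),
    (∀ i, 0 ≤ p i) ∧
    ρ = ∑ i, (p i : ℂ) •
      (vecMulVec (a i) (star (a i)) ⊗ₖ vecMulVec (b i) (star (b i)))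

theorem sep_of_fintype {d : ℕ} {ι : Type} [Fintype ι] (p : ι → ℝ) (a b : ι → Fin d → ℂ)
    (hp : ∀ i, 0 ≤ p i) :
    SeparableState (∑ i, (p i : ℂ) •
      (vecMulVec (a i) (star (a i)) ⊗ₖ vecMulVec (b i) (star (b i)))) := by
  let e := (Fintype.equivFin ι).symm
  refine ⟨Fintype.card ι, p ∘ e, a ∘ e, b ∘ e, fun i => hp _, ?_⟩
  exact (Equiv.sum_comp e (fun i => (p i : ℂ) •
      (vecMulVec (a i) (star (a i)) ⊗ₖ vecMulVec (b i) (star (b i))))).symm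

theorem sep_add {d : ℕ} {ρ σ : Matrix (Fin d × Fin d) (Fin d × Fin d) ℂ}
    (hρ : SeparableState ρ) (hσ : SeparableState σ) : SeparableState (ρ + σ) := by
  obtain ⟨m, p, a, b, hp, rfl⟩ := hρ
  obtain ⟨n, q, a', b', hq, rfl⟩ := hσ
  have := sep_of_fintype (Sum.elim p q) (Sum.elim a a') (Sum.elim b b')
    (by rintro (i | i) <;> simp [hp, hq])
  simpa [Fintype.sum_sum_type] using this

theorem sep_smul {d : ℕ} {ρ : Matrix (Fin d × Fin d) (Fin d × Fin d) ℂ} (c : ℝ) (hc : 0 ≤ c)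
    (hρ : SeparableState ρ) : SeparableState ((c : ℂ) • ρ) := by
  obtain ⟨m, p, a, b, hp, rfl⟩ := hρ
  refine ⟨m, fun i => c * p i, a, b, fun i => mul_nonneg hc (hp i), ?_⟩
  simp only [Finset.smul_sum, smul_smul, Complex.ofReal_mul]

theorem sep_zero {d : ℕ} : SeparableState (0 : Matrix (Fin d × Fin d) (Fin d × Fin d) ℂ) :=
  ⟨0, Fin.elim0, Fin.elim0, Fin.elim0, fun i => i.elim0, by simp⟩

theorem sep_sum {d : ℕ} {ι : Type} (s : Finset ι)
    (f : ι → Matrix (Fin d × Fin d) (Fin d × Fin d) ℂ)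
    (h : ∀ i ∈ s, SeparableState (f i)) : SeparableState (∑ i ∈ s, f i) :=
  Finset.sum_induction f SeparableState (fun _ _ => sep_add) sep_zero h

/-- Diagonal nonnegative matrices are separable. -/
theorem sep_diag {d : ℕ} (w : Fin d × Fin d → ℝ) (hw : ∀ x, 0 ≤ w x) :
    SeparableState (Matrix.diagonal fun x => (w x : ℂ)) := by
  have := sep_of_fintype w (fun x => Pi.single x.1 1) (fun x => Pi.single x.2 1) hw
  convert this using 1
  ext ⟨i, j⟩ ⟨k, l⟩
  simp only [Matrix.sum_apply, Matrix.smul_apply, kroneckerMap_apply, vecMulVec_apply,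
    Pi.star_apply, Pi.single_apply, Fintype.sum_prod_type, Matrix.diagonal_apply, smul_eq_mul,
    Prod.mk.injEq]
  rw [Finset.sum_eq_single i, Finset.sum_eq_single j]
  · by_cases h1 : i = k <;> by_cases h2 : j = l <;> simp [h1, h2, eq_comm]
  · intro b _ hb; simp [hb.symm]
  · simp
  · intro b _ hb; simp [hb.symm]
  · simp

theorem single_pair {d : ℕ} (i j k l : Fin d) :
    (Pi.single i 1 + Pi.single j 1 - Pi.single k 1 - Pi.single l 1 : Fin d → ZMod 3) = 0 ↔
      (i = k ∧ j = l) ∨ (i = l ∧ j = k) := by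
  constructor
  · intro h
    have inj : ∀ x y : Fin d, (Pi.single x 1 : Fin d → ZMod 3) = Pi.single y 1 → x = y := by
      intro x y hxy
      by_contra hne
      have := congrFun hxy x
      simp [Pi.single_apply, hne] at this
    by_cases h1 : i = k
    · subst h1
      refine Or.inl ⟨rfl, inj _ _ (sub_eq_zero.mp ?_)⟩
      rw [← h]; abel
    by_cases h2 : i = l
    · subst h2
      refine Or.inr ⟨rfl, inj _ _ (sub_eq_zero.mp ?_)⟩
      rw [← h]; abel
    exfalso
    have hi := congrFun h i
    simp only [Pi.add_apply, Pi.sub_apply, Pi.single_apply, Pi.zero_apply, h1, h2, if_true,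
      if_false] at hi
    split_ifs at hi <;> revert hi <;> decide
  · rintro (⟨rfl, rfl⟩ | ⟨rfl, rfl⟩) <;> abel

/-- Phase-twirled product matrices are separable. -/
theorem sep_twirl {d : ℕ} (u v : Fin d → ℂ) :
    SeparableState (Matrix.of fun (x y : Fin d × Fin d) =>
      if (x.1 = y.1 ∧ x.2 = y.2) ∨ (x.1 = y.2 ∧ x.2 = y.1) then
        u x.1 * v x.2 * star (u y.1) * star (v y.2) else 0) := by
  have := sep_of_fintype (ι := AddChar (Fin d → ZMod 3) ℂ)
    (fun _ => ((Fintype.card (Fin d → ZMod 3) : ℝ))⁻¹)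
    (fun ψ i => ψ (Pi.single i 1) * u i) (fun ψ i => ψ (Pi.single i 1) * v i)
    (fun _ => by positivity)
  convert this using 1
  ext ⟨i, j⟩ ⟨k, l⟩
  simp only [Matrix.sum_apply, Matrix.smul_apply, kroneckerMap_apply, vecMulVec_apply,
    Pi.star_apply, smul_eq_mul, Matrix.of_apply]
  have key : ∀ ψ : AddChar (Fin d → ZMod 3) ℂ,
      (((Fintype.card (Fin d → ZMod 3) : ℝ)⁻¹ : ℝ) : ℂ) *
        (ψ (Pi.single i 1) * u i * star (ψ (Pi.single k 1) * u k) *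
          (ψ (Pi.single j 1) * v j * star (ψ (Pi.single l 1) * v l))) =
      ((Fintype.card (Fin d → ZMod 3) : ℂ)⁻¹ * (u i * v j * star (u k) * star (v l))) *
        ψ (Pi.single i 1 + Pi.single j 1 - Pi.single k 1 - Pi.single l 1) := by
    intro ψ
    rw [sub_eq_add_neg, sub_eq_add_neg, AddChar.map_add_eq_mul, AddChar.map_add_eq_mul,
      AddChar.map_add_eq_mul, AddChar.map_neg_eq_conj, AddChar.map_neg_eq_conj]
    simp only [star_mul', Complex.star_def, Complex.ofReal_inv, Complex.ofReal_natCast]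
    ring
  rw [Finset.sum_congr rfl fun ψ _ => key ψ, ← Finset.mul_sum, AddChar.sum_apply_eq_ite]
  simp only [single_pair]
  split_ifs
  · have : (Fintype.card (Fin d → ZMod 3) : ℂ) ≠ 0 := by
      exact_mod_cast Fintype.card_ne_zero
    field_simp
  · simp

theorem sep_plus (d : ℕ) : SeparableState (1 + flipOp d) := by
  have := sep_add (sep_twirl (d := d) 1 1)
    (sep_diag (fun x => if x.1 = x.2 then 1 else 0) (fun x => by split_ifs <;> norm_num))
  convert this using 1
  ext ⟨i, j⟩ ⟨k, l⟩
  simp only [flipOp, Matrix.add_apply, Matrix.of_apply, Matrix.one_apply, Matrix.diagonal_apply,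
    Prod.mk.injEq, Pi.one_apply, star_one, mul_one]
  by_cases h1 : i = k <;> by_cases h2 : j = l <;> by_cases h3 : i = l <;> by_cases h4 : j = k <;>
      by_cases h5 : i = j <;> simp_all

theorem sum_diff {d : ℕ} (j l : Fin d) :
    (∑ p : Fin d, ∑ q : Fin d, ((Pi.single p 1 - Pi.single q 1 : Fin d → ℂ) j) *
      star ((Pi.single p 1 - Pi.single q 1 : Fin d → ℂ) l)) =
      (if j = l then 2 * (d : ℂ) else 0) - 2 := by
  have h : ∀ p q : Fin d, ((Pi.single p 1 - Pi.single q 1 : Fin d → ℂ) j) *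
      star ((Pi.single p 1 - Pi.single q 1 : Fin d → ℂ) l) =
      (if j = p then 1 else 0) * (if l = p then 1 else 0)
      + (if j = q then 1 else 0) * (if l = q then 1 else 0)
      - (if j = p then 1 else 0) * (if l = q then 1 else 0)
      - (if j = q then 1 else 0) * (if l = p then 1 else 0) := by
    intro p q
    simp only [Pi.sub_apply, Pi.single_apply, star_sub]
    split_ifs <;> simp
  simp only [h, Finset.sum_sub_distrib, Finset.sum_add_distrib]
  by_cases hjl : j = l
  · subst hjl
    simp
    ring
  · simp [hjl, Ne.symm hjl, eq_comm]
    try ring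

theorem sep_minus (d : ℕ) : SeparableState ((d : ℂ) • 1 - flipOp d) := by
  have := sep_smul (1/2) (by norm_num) (sep_add
    (sep_sum (Finset.univ) _ (fun p _ => sep_sum Finset.univ _ (fun q _ =>
      sep_twirl (d := d) 1 (Pi.single p 1 - Pi.single q 1))))
    (sep_diag (fun x => if x.1 = x.2 then 0 else 2) (fun x => by split_ifs <;> norm_num)))
  convert this using 1
  ext ⟨i, j⟩ ⟨k, l⟩
  have hs := sum_diff j l
  simp only [flipOp, Matrix.add_apply, Matrix.of_apply, Matrix.one_apply, Matrix.diagonal_apply,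
    Prod.mk.injEq, Pi.one_apply, star_one, mul_one, one_mul, Matrix.sum_apply, Matrix.smul_apply,
    Matrix.sub_apply, smul_eq_mul]
  by_cases hc : (i = k ∧ j = l) ∨ (i = l ∧ j = k)
  · simp only [hc, if_true]
    rw [hs]
    rcases hc with ⟨rfl, rfl⟩ | ⟨rfl, rfl⟩
    · by_cases h : i = j
      · subst h; simp; ring
      · simp [h]
    · by_cases h : i = j
      · subst h; simp; ring
      · simp [h, Ne.symm h]
  · simp only [hc, if_false]
    rw [not_or] at hc
    simp [hc.1, hc.2]

theorem sep_flip_nonneg {d : ℕ} {ρ : Matrix (Fin d × Fin d) (Fin d × Fin d) ℂ}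
    (hρ : SeparableState ρ) : 0 ≤ (∑ i, ∑ j, ρ (i, j) (j, i)).re := by
  obtain ⟨m, p, a, b, hp, rfl⟩ := hρ
  have : (∑ i, ∑ j, (∑ n, (p n : ℂ) • (vecMulVec (a n) (star (a n)) ⊗ₖ
      vecMulVec (b n) (star (b n)))) (i, j) (j, i)) =
      ((∑ n, p n * Complex.normSq (∑ i, a n i * star (b n i)) : ℝ) : ℂ) := by
    simp only [Matrix.sum_apply, Matrix.smul_apply, kroneckerMap_apply, vecMulVec_apply,
      Pi.star_apply, smul_eq_mul]
    push_cast
    simp_rw [Complex.normSq_eq_conj_mul_self, map_sum, Finset.sum_mul_sum, Finset.mul_sum]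
    rw [Finset.sum_congr rfl fun i _ => Finset.sum_comm, Finset.sum_comm]
    refine Finset.sum_congr rfl fun n _ => ?_
    rw [Finset.sum_comm]
    refine Finset.sum_congr rfl fun i _ => Finset.sum_congr rfl fun j _ => ?_
    simp only [map_mul, Complex.star_def, Complex.conj_conj]
    ring
  rw [this, Complex.ofReal_re]
  exact Finset.sum_nonneg fun n _ => mul_nonneg (hp n) (Complex.normSq_nonneg _)

/-- For `d ≥ 2` and `t ∈ [-1,1]`, the Werner state `ρ_W(t) = I - t F` is separable
if and only if `t ≤ 1/d`. -/
theorem werner_separable_iff (d : ℕ) (hd : 2 ≤ d) (t : ℝ) (ht : t ∈ Set.Icc (-1 : ℝ) 1) :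
    SeparableState ((1 : Matrix (Fin d × Fin d) (Fin d × Fin d) ℂ) - (t : ℂ) • flipOp d) ↔
      t ≤ 1 / d := by
  have hd0 : (0 : ℝ) < d := by exact_mod_cast (by omega : 0 < d)
  constructor
  · intro h
    have h1 := sep_flip_nonneg h
    have h2 : (∑ i : Fin d, ∑ j : Fin d, ((1 : Matrix (Fin d × Fin d) (Fin d × Fin d) ℂ) -
        (t : ℂ) • flipOp d) (i, j) (j, i)) = ((d - d * (d * t) : ℝ) : ℂ) := by
      have : ∀ i j : Fin d, ((1 : Matrix (Fin d × Fin d) (Fin d × Fin d) ℂ) -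
        (t : ℂ) • flipOp d) (i, j) (j, i) = (if i = j then 1 else 0) - (t : ℂ) := by
        intro i j
        by_cases h : i = j <;> simp [flipOp, Matrix.one_apply, h]
      simp only [this]
      simp
      try ring
    rw [h2, Complex.ofReal_re] at h1
    rw [le_div_iff₀ hd0]
    nlinarith
  · intro h
    rw [le_div_iff₀ hd0] at h
    have := sep_add
      (sep_smul ((1 - t * d) / (d + 1)) (div_nonneg (by linarith) (by linarith)) (sep_plus d))
      (sep_smul ((1 + t) / (d + 1)) (div_nonneg (by linarith [ht.1]) (by linarith)) (sep_minus d))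
    convert this using 1
    have hne : (d : ℂ) + 1 ≠ 0 := by exact_mod_cast Nat.succ_ne_zero d
    ext x y
    simp only [Matrix.add_apply, Matrix.sub_apply, Matrix.smul_apply, smul_eq_mul]
    push_cast
    field_simp
    ring
end

section
/- Let d ≥ 2 and let P be the matrix of order d² with entries P_{(i,j),(k,l)} = (1/d) δ_{i,j} δ_{k,l}. For t ∈ [−1, 1], there exist vectors x, y, u, v ∈ ℂ^d such that the vector ψ = x ⊗ u + y ⊗ v ∈ ℂ^d ⊗ ℂ^d satisfies ⟨ψ| (I − t d P) |ψ⟩ < 0 if and only if 1/2 < t. (Equivalently, the Werner state ρ_W(t) = I − t F is 1-distillable if and only if 1/2 < t ≤ 1.) -/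
open Matrix

/-- The matrix `P` with entries `P_{(i,j),(k,l)} = (1/d) δ_{i,j} δ_{k,l}`. -/
noncomputable def projME (d : ℕ) : Matrix (Fin d × Fin d) (Fin d × Fin d) ℂ :=
  Matrix.of fun p q => if p.1 = p.2 ∧ q.1 = q.2 then 1 / (d : ℂ) else 0

lemma werner_form (d : ℕ) (hd : 2 ≤ d) (t : ℝ) (ψ : Fin d × Fin d → ℂ) :
    (star ψ ⬝ᵥ (((1 : Matrix (Fin d × Fin d) (Fin d × Fin d) ℂ) -
      (t : ℂ) • ((d : ℂ) • projME d)) *ᵥ ψ)).re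
      = (∑ p, Complex.normSq (ψ p)) - t * Complex.normSq (∑ i, ψ (i, i)) := by
  have hd0 : (d : ℂ) ≠ 0 := by
    have : d ≠ 0 := by omega
    exact_mod_cast this
  have h1 : ((d : ℂ) • projME d) *ᵥ ψ
      = fun p => if p.1 = p.2 then ∑ i, ψ (i, i) else 0 := by
    funext p
    simp only [mulVec, dotProduct, projME, Matrix.smul_apply, Matrix.of_apply, smul_eq_mul,
      Fintype.sum_prod_type]
    by_cases hp : p.1 = p.2
    · simp [hp, hd0]
    · simp [hp]
  have h2 : star ψ ⬝ᵥ (fun p : Fin d × Fin d => if p.1 = p.2 then ∑ i, ψ (i, i) else 0)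
      = (Complex.normSq (∑ i, ψ (i, i)) : ℂ) := by
    simp only [dotProduct, Fintype.sum_prod_type, Complex.normSq_eq_conj_mul_self, map_sum,
      Finset.sum_mul, Pi.star_apply]
    simp
  have h3 : star ψ ⬝ᵥ ψ = ((∑ p, Complex.normSq (ψ p) : ℝ) : ℂ) := by
    simp [dotProduct, Complex.normSq_eq_conj_mul_self]
  rw [sub_mulVec, one_mulVec, smul_mulVec, h1, dotProduct_sub, dotProduct_smul, h2, h3,
    smul_eq_mul, ← Complex.ofReal_mul, ← Complex.ofReal_sub, Complex.ofReal_re]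

lemma cs_normSq {d : ℕ} (x u : Fin d → ℂ) :
    ‖∑ i, x i * u i‖ ^ 2 ≤ (∑ i, Complex.normSq (x i)) * ∑ i, Complex.normSq (u i) := by
  have h1 : ‖∑ i, x i * u i‖ ≤ ∑ i, ‖x i‖ * ‖u i‖ := by
    refine (norm_sum_le _ _).trans (le_of_eq ?_)
    simp
  have h2 := Finset.sum_mul_sq_le_sq_mul_sq Finset.univ (fun i => ‖x i‖) (fun i => ‖u i‖)
  simp only [Complex.normSq_eq_norm_sq]
  exact (pow_le_pow_left₀ (norm_nonneg _) h1 2).trans h2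

lemma rank_two_orth {d : ℕ} (x y u v : Fin d → ℂ)
    (h : ∑ i, x i * (starRingEnd ℂ) (y i) = 0) :
    Complex.normSq (∑ i, (x i * u i + y i * v i)) ≤
      2 * ∑ p : Fin d × Fin d, Complex.normSq (x p.1 * u p.2 + y p.1 * v p.2) := by
  have e : ∑ p : Fin d × Fin d, Complex.normSq (x p.1 * u p.2 + y p.1 * v p.2)
      = (∑ i, Complex.normSq (x i)) * (∑ i, Complex.normSq (u i))
        + (∑ i, Complex.normSq (y i)) * (∑ i, Complex.normSq (v i)) := by
    have hc : ∑ p : Fin d × Fin d,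
        (x p.1 * u p.2 * (starRingEnd ℂ) (y p.1 * v p.2)) = 0 := by
      have : (∑ i, x i * (starRingEnd ℂ) (y i)) * (∑ j, u j * (starRingEnd ℂ) (v j)) = 0 := by
        rw [h, zero_mul]
      rw [Finset.sum_mul_sum] at this
      rw [Fintype.sum_prod_type, ← this]
      refine Finset.sum_congr rfl fun i _ => Finset.sum_congr rfl fun j _ => ?_
      simp only [map_mul]; ring
    simp only [Complex.normSq_add, Finset.sum_add_distrib, ← Finset.mul_sum, ← Complex.re_sum, hc]
    simp [Fintype.sum_prod_type, Finset.sum_mul_sum]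
  rw [e, Finset.sum_add_distrib, Complex.normSq_eq_norm_sq]
  have h1 := cs_normSq x u
  have h2 := cs_normSq y v
  have h3 := norm_add_le (∑ i, x i * u i) (∑ i, y i * v i)
  have h4 := pow_le_pow_left₀ (norm_nonneg _) h3 2
  nlinarith [sq_nonneg (‖∑ i, x i * u i‖ - ‖∑ i, y i * v i‖)]

lemma rank_two {d : ℕ} (x y u v : Fin d → ℂ) :
    Complex.normSq (∑ i, (x i * u i + y i * v i)) ≤
      2 * ∑ p : Fin d × Fin d, Complex.normSq (x p.1 * u p.2 + y p.1 * v p.2) := by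
  obtain ⟨c, hc⟩ : ∃ c : ℂ, ∑ i, x i * (starRingEnd ℂ) (y i - c * x i) = 0 := by
    by_cases hx : ∑ i, x i * (starRingEnd ℂ) (x i) = 0
    · have hx0 : ∀ i, x i = 0 := by
        simp only [Complex.mul_conj] at hx
        have hx' : ∑ i, Complex.normSq (x i) = 0 := by exact_mod_cast hx
        rw [Finset.sum_eq_zero_iff_of_nonneg (fun i _ => Complex.normSq_nonneg _)] at hx'
        intro i
        exact Complex.normSq_eq_zero.1 (hx' i (Finset.mem_univ i))
      exact ⟨0, by simp [hx0]⟩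
    · refine ⟨(starRingEnd ℂ) ((∑ i, x i * (starRingEnd ℂ) (y i)) /
        ∑ i, x i * (starRingEnd ℂ) (x i)), ?_⟩
      simp only [map_sub, map_mul (starRingEnd ℂ) _ (x _), Complex.conj_conj, mul_sub,
        Finset.sum_sub_distrib, mul_left_comm (x _), ← Finset.mul_sum]
      rw [div_mul_cancel₀ _ hx, sub_self]
  have := rank_two_orth x (fun i => y i - c * x i) (fun i => u i + c * v i) v hc
  have e : ∀ i j, x i * (u j + c * v j) + (y i - c * x i) * v j = x i * u j + y i * v j := by
    intro i j; ring
  simpa only [e] using this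

/-- For `d ≥ 2` and `t ∈ [-1,1]`: there exist `x, y, u, v ∈ ℂ^d` such that
`ψ = x ⊗ u + y ⊗ v` satisfies `⟨ψ| (I - t d P) |ψ⟩ < 0` iff `1/2 < t`; i.e. the Werner
state `ρ_W(t)` is 1-distillable iff `1/2 < t`. -/
theorem werner_oneDistillable_iff (d : ℕ) (hd : 2 ≤ d) (t : ℝ)
    (ht : t ∈ Set.Icc (-1 : ℝ) 1) :
    (∃ x y u v : Fin d → ℂ,
      ((star (fun p : Fin d × Fin d => x p.1 * u p.2 + y p.1 * v p.2)) ⬝ᵥ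
        (((1 : Matrix (Fin d × Fin d) (Fin d × Fin d) ℂ) - (t : ℂ) • ((d : ℂ) • projME d)) *ᵥ
          fun p : Fin d × Fin d => x p.1 * u p.2 + y p.1 * v p.2)).re < 0) ↔
      1 / 2 < t := by
  simp only [werner_form d hd]
  constructor
  · rintro ⟨x, y, u, v, h⟩
    by_contra! hlt
    have h1 := rank_two x y u v
    have h2 := Complex.normSq_nonneg (∑ i, (x i * u i + y i * v i))
    nlinarith
  · intro hlt
    let a : Fin d := ⟨0, by omega⟩
    let b : Fin d := ⟨1, by omega⟩
    have hab : a ≠ b := by simp [a, b]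
    refine ⟨Pi.single a 1, Pi.single b 1, Pi.single a 1, Pi.single b 1, ?_⟩
    have e1 : ∑ i, ((Pi.single a 1 : Fin d → ℂ) i * (Pi.single a 1 : Fin d → ℂ) i
        + (Pi.single b 1 : Fin d → ℂ) i * (Pi.single b 1 : Fin d → ℂ) i) = 2 := by
      simp [Finset.sum_add_distrib, Pi.single_apply]
      norm_num
    have e2 : ∑ p : Fin d × Fin d, Complex.normSq
        ((Pi.single a 1 : Fin d → ℂ) p.1 * (Pi.single a 1 : Fin d → ℂ) p.2
        + (Pi.single b 1 : Fin d → ℂ) p.1 * (Pi.single b 1 : Fin d → ℂ) p.2) = 2 := by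
      have : ∀ p : Fin d × Fin d, Complex.normSq
        ((Pi.single a 1 : Fin d → ℂ) p.1 * (Pi.single a 1 : Fin d → ℂ) p.2
        + (Pi.single b 1 : Fin d → ℂ) p.1 * (Pi.single b 1 : Fin d → ℂ) p.2)
        = (if p = (a, a) then 1 else 0) + (if p = (b, b) then 1 else 0) := by
        rintro ⟨i, j⟩
        simp only [Pi.single_apply, Prod.mk.injEq]
        by_cases h1 : i = a <;> by_cases h2 : j = a <;> by_cases h3 : i = b <;>
          by_cases h4 : j = b <;> simp_all
      simp only [this, Finset.sum_add_distrib]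
      simp
      norm_num
    rw [e1, e2]
    norm_num
    linarith
end

section
/- For all unitary d×d matrices A, B and all complex d×d matrices X, Y: H(AXB, AYB) = (I₂ ⊗ B† ⊗ A*) H(X,Y) (I₂ ⊗ B ⊗ Aᵀ), where ⊗ is the Kronecker product, A* the entrywise conjugate, and B† the conjugate transpose. -/
open Matrix Kronecker
open scoped ComplexOrder

/-- `vec(Z)`: the column vector (indexed by `(column, row)` in column-stacking order)
obtained by stacking the columns of `Z`. -/
def vecCol {d : ℕ} (Z : Matrix (Fin d) (Fin d) ℂ) : Fin d × Fin d → ℂ :=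
  fun p => Z p.2 p.1

/-- The hermitian matrix `H(X,Y) = H₁ - ½(H₂ + H₃) + ¼H₄` of order `2d²`, where in 2×2
block form (blocks of order `d²`, block indices from `![X, Y]`):
`H₁ = [[‖X‖², tr(X†Y)],[tr(Y†X), ‖Y‖²]] ⊗ I_{d²}`, `H₂ = [[X†X, X†Y],[Y†X, Y†Y]] ⊗ I_d`,
`H₃` has blocks `I_d ⊗ (entrywise conj)·(transpose)`, and `H₄` has blocks
`vec(·)* vec(·)ᵀ`. -/
noncomputable def Hmat {d : ℕ} (X Y : Matrix (Fin d) (Fin d) ℂ) :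
    Matrix (Fin 2 × Fin d × Fin d) (Fin 2 × Fin d × Fin d) ℂ :=
  Matrix.of fun p q =>
    ((![X, Y] p.1)ᴴ * ![X, Y] q.1).trace * (if p.2 = q.2 then 1 else 0)
    - (1 / 2) * (((![X, Y] p.1)ᴴ * ![X, Y] q.1) p.2.1 q.2.1 *
          (if p.2.2 = q.2.2 then 1 else 0)
        + (if p.2.1 = q.2.1 then 1 else 0) *
          ((![X, Y] p.1)ᴴᵀ * (![X, Y] q.1)ᵀ) p.2.2 q.2.2)
    + (1 / 4) * ((starRingEnd ℂ) (vecCol (![X, Y] p.1) p.2) * vecCol (![X, Y] q.1) q.2)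

/-- One block of `Hmat`. -/
noncomputable def blk {d : ℕ} (X Y : Matrix (Fin d) (Fin d) ℂ) :
    Matrix (Fin d × Fin d) (Fin d × Fin d) ℂ :=
  (Xᴴ * Y).trace • ((1 : Matrix (Fin d) (Fin d) ℂ) ⊗ₖ (1 : Matrix (Fin d) (Fin d) ℂ))
    - (1 / 2 : ℂ) • ((Xᴴ * Y) ⊗ₖ (1 : Matrix (Fin d) (Fin d) ℂ)
      + (1 : Matrix (Fin d) (Fin d) ℂ) ⊗ₖ (Xᴴᵀ * Yᵀ))
    + (1 / 4 : ℂ) • vecMulVec (star (vecCol X)) (vecCol Y)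

lemma Hmat_apply {d : ℕ} (X Y : Matrix (Fin d) (Fin d) ℂ) (i j : Fin 2) (p q : Fin d × Fin d) :
    Hmat X Y (i, p) (j, q) = blk (![X, Y] i) (![X, Y] j) p q := by
  simp only [Hmat, blk, Matrix.of_apply, Matrix.add_apply, Matrix.sub_apply, Matrix.smul_apply,
    smul_eq_mul, vecMulVec_apply, kroneckerMap_apply, one_kronecker_one, Matrix.one_apply,
    Pi.star_apply, starRingEnd_apply]

lemma vecCol_mul {d : ℕ} (A B Y : Matrix (Fin d) (Fin d) ℂ) :
    vecCol (A * Y * B) = vecCol Y ᵥ* (B ⊗ₖ Aᵀ) := by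
  ext ⟨a, b⟩
  simp only [vecCol, vecMul, dotProduct, Fintype.sum_prod_type, kroneckerMap_apply,
    Matrix.mul_apply, transpose_apply, Finset.sum_mul]
  refine Finset.sum_congr rfl fun x _ => Finset.sum_congr rfl fun y _ => ?_
  ring

lemma blk_transform {d : ℕ} (A B : Matrix (Fin d) (Fin d) ℂ)
    (hA : A ∈ Matrix.unitaryGroup (Fin d) ℂ) (hB : B ∈ Matrix.unitaryGroup (Fin d) ℂ)
    (X Y : Matrix (Fin d) (Fin d) ℂ) :
    blk (A * X * B) (A * Y * B) = (Bᴴ ⊗ₖ Aᴴᵀ) * blk X Y * (B ⊗ₖ Aᵀ) := by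
  have hA1 : Aᴴ * A = 1 := Matrix.mem_unitaryGroup_iff'.1 hA
  have hB1 : Bᴴ * B = 1 := Matrix.mem_unitaryGroup_iff'.1 hB
  have hB2 : B * Bᴴ = 1 := Matrix.mem_unitaryGroup_iff.1 hB
  have hA3 : Aᴴᵀ * Aᵀ = 1 := by
    rw [← transpose_mul, show A * Aᴴ = 1 from Matrix.mem_unitaryGroup_iff.1 hA, transpose_one]
  have hB3 : Bᴴᵀ * Bᵀ = 1 := by rw [← transpose_mul, hB2, transpose_one]
  have e2 : (A * X * B)ᴴ * (A * Y * B) = Bᴴ * (Xᴴ * Y) * B := by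
    calc _ = Bᴴ * (Xᴴ * ((Aᴴ * A) * Y)) * B := by
          simp only [conjTranspose_mul, Matrix.mul_assoc]
      _ = _ := by rw [hA1, Matrix.one_mul]
  have e3 : (A * X * B)ᴴᵀ * (A * Y * B)ᵀ = Aᴴᵀ * (Xᴴᵀ * Yᵀ) * Aᵀ := by
    calc _ = Aᴴᵀ * (Xᴴᵀ * ((Bᴴᵀ * Bᵀ) * Yᵀ)) * Aᵀ := by
          simp only [conjTranspose_mul, transpose_mul, Matrix.mul_assoc]
      _ = _ := by rw [hB3, Matrix.one_mul]
  have e1 : (Bᴴ * (Xᴴ * Y) * B).trace = (Xᴴ * Y).trace := by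
    rw [Matrix.trace_mul_cycle, hB2, Matrix.one_mul]
  have hK : (B ⊗ₖ Aᵀ)ᴴ = Bᴴ ⊗ₖ Aᴴᵀ := by
    rw [conjTranspose_kronecker]; rfl
  have e4 : vecMulVec (star (vecCol (A * X * B))) (vecCol (A * Y * B))
      = (Bᴴ ⊗ₖ Aᴴᵀ) * vecMulVec (star (vecCol X)) (vecCol Y) * (B ⊗ₖ Aᵀ) := by
    rw [vecCol_mul, vecCol_mul, star_vecMul, hK, mul_vecMulVec, vecMulVec_mul]
  unfold blk
  rw [e4, e2, e3, e1]
  simp only [Matrix.mul_add, Matrix.mul_sub, Matrix.add_mul, Matrix.sub_mul, Matrix.mul_smul,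
    Matrix.smul_mul, ← mul_kronecker_mul, Matrix.mul_one, hA3, hB1]

/-- For unitary `A, B`: `H(AXB, AYB) = (I₂ ⊗ B† ⊗ A*) H(X,Y) (I₂ ⊗ B ⊗ Aᵀ)`. -/
theorem Hmat_unitary_transform (d : ℕ) (A B : Matrix (Fin d) (Fin d) ℂ)
    (hA : A ∈ Matrix.unitaryGroup (Fin d) ℂ) (hB : B ∈ Matrix.unitaryGroup (Fin d) ℂ)
    (X Y : Matrix (Fin d) (Fin d) ℂ) :
    Hmat (A * X * B) (A * Y * B) =
      ((1 : Matrix (Fin 2) (Fin 2) ℂ) ⊗ₖ (Bᴴ ⊗ₖ Aᴴᵀ)) * Hmat X Y *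
        ((1 : Matrix (Fin 2) (Fin 2) ℂ) ⊗ₖ (B ⊗ₖ Aᵀ)) := by
  ext ⟨i, p⟩ ⟨j, q⟩
  have hv : ∀ k : Fin 2, ![A * X * B, A * Y * B] k = A * ![X, Y] k * B := by
    intro k; fin_cases k <;> rfl
  rw [Hmat_apply, hv, hv, blk_transform A B hA hB]
  simp only [Matrix.mul_apply (M := _ * _), Matrix.mul_apply, Fintype.sum_prod_type (α₁ := Fin 2),
    kroneckerMap_apply (f := (· * ·)) (A := (1 : Matrix (Fin 2) (Fin 2) ℂ)), Matrix.one_apply,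
    Hmat_apply, ite_mul, mul_ite, one_mul, zero_mul, mul_zero]
  simp [Finset.sum_ite_irrel]
end

section
/- Let Λ = [[α, β],[γ, δ]] be an invertible 2×2 complex matrix. Then for all complex d×d matrices X, Y: H(αX + βY, γX + δY) = (Λ* ⊗ I_{d²}) H(X,Y) (Λᵀ ⊗ I_{d²}), where Λ* is the entrywise complex conjugate and Λᵀ the transpose. -/
open Matrix Kronecker
open scoped ComplexOrder

theorem Hmat_aux {d : ℕ} (A B : Matrix (Fin 2) (Fin 2) ℂ)
    (M : Matrix (Fin 2 × Fin d × Fin d) (Fin 2 × Fin d × Fin d) ℂ)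
    (i j : Fin 2) (a b : Fin d × Fin d) :
    ((A ⊗ₖ (1 : Matrix (Fin d × Fin d) (Fin d × Fin d) ℂ)) * M *
      (B ⊗ₖ (1 : Matrix (Fin d × Fin d) (Fin d × Fin d) ℂ))) (i, a) (j, b) =
    ∑ l, (∑ k, A i k * M (k, a) (l, b)) * B l j := by
  simp only [Matrix.mul_apply, Fintype.sum_prod_type (α₁ := Fin 2), Matrix.kroneckerMap_apply,
    Matrix.one_apply, mul_ite, ite_mul, mul_one, mul_zero, zero_mul, Finset.sum_ite_eq,
    Finset.sum_ite_eq', Finset.mem_univ, if_true]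

/-- For an invertible `Λ = [[α,β],[γ,δ]]`:
`H(αX+βY, γX+δY) = (Λ* ⊗ I_{d²}) H(X,Y) (Λᵀ ⊗ I_{d²})`. -/
theorem Hmat_GL2_transform (d : ℕ) (α β γ δ : ℂ) (h : α * δ - β * γ ≠ 0)
    (X Y : Matrix (Fin d) (Fin d) ℂ) :
    Hmat (α • X + β • Y) (γ • X + δ • Y) =
      ((!![α, β; γ, δ])ᴴᵀ ⊗ₖ (1 : Matrix (Fin d × Fin d) (Fin d × Fin d) ℂ)) * Hmat X Y *
        ((!![α, β; γ, δ])ᵀ ⊗ₖ (1 : Matrix (Fin d × Fin d) (Fin d × Fin d) ℂ)) := by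
  ext ⟨i, a⟩ ⟨j, b⟩
  rw [Hmat_aux]
  fin_cases i <;> fin_cases j <;>
  simp [Fin.sum_univ_two, Hmat, vecCol, Matrix.add_mul, Matrix.mul_add, Matrix.trace_add,
    Matrix.trace_smul, Matrix.conjTranspose_add, Matrix.conjTranspose_smul, Matrix.transpose_add,
    Matrix.transpose_smul, -mul_ite, -ite_mul, -mul_eq_mul_left_iff] <;>
  ring
end

section
/- For all diagonal complex d×d matrices X and Y, the hermitian matrix H(X,Y) is positive semidefinite. -/
open Matrix Kronecker
open scoped ComplexOrder

lemma Hmat_diag_eq {d : ℕ} (x y : Fin d → ℂ) :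
    Hmat (diagonal x) (diagonal y) =
      (∑ k : Fin d, (vecMulVec (star fun s : Fin 2 => ![x, y] s k) (fun s : Fin 2 => ![x, y] s k)) ⊗ₖ
        (diagonal fun p : Fin d × Fin d =>
          (1 - (1 / 2) * (if k = p.1 then 1 else 0) - (1 / 2) * (if k = p.2 then 1 else 0) : ℂ)))
      + (1 / 4 : ℂ) • vecMulVec
          (star fun p : Fin 2 × Fin d × Fin d => vecCol (diagonal (![x, y] p.1)) p.2)
          (fun p : Fin 2 × Fin d × Fin d => vecCol (diagonal (![x, y] p.1)) p.2) := by
  have hz : ∀ s : Fin 2, ![diagonal x, diagonal y] s = diagonal (![x, y] s) := by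
    intro s; fin_cases s <;> rfl
  ext ⟨s, a, b⟩ ⟨t, a', b'⟩
  simp only [Hmat, of_apply, hz, Matrix.add_apply, Matrix.sum_apply, kroneckerMap_apply,
    Matrix.smul_apply, vecMulVec_apply, diagonal_conjTranspose, diagonal_transpose,
    diagonal_mul_diagonal, trace_diagonal, Pi.star_apply, smul_eq_mul, starRingEnd_apply]
  congr 1
  generalize ![x, y] s = u
  generalize ![x, y] t = v
  by_cases ha : a = a'
  · by_cases hb : b = b'
    · subst ha hb
      simp [mul_sub, Finset.sum_sub_distrib]
      ring
    · simp [ha, hb, diagonal_apply]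
  · simp [ha, diagonal_apply]

/-- For all diagonal `X, Y`, the hermitian matrix `H(X,Y)` is positive semidefinite. -/
theorem Hmat_posSemidef_of_diagonal (d : ℕ) (X Y : Matrix (Fin d) (Fin d) ℂ)
    (hX : X.IsDiag) (hY : Y.IsDiag) :
    (Hmat X Y).PosSemidef := by
  rw [← hX.diagonal_diag, ← hY.diagonal_diag, Hmat_diag_eq]
  refine PosSemidef.add (posSemidef_sum _ fun k _ => ?_) ?_
  · refine PosSemidef.kronecker (posSemidef_vecMulVec_star_self _) ?_
    refine PosSemidef.diagonal fun p => ?_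
    simp only [Pi.zero_apply]
    split_ifs <;> norm_num [Complex.le_def]
  · refine PosSemidef.smul (posSemidef_vecMulVec_star_self _) ?_
    norm_num [Complex.le_def]
end

section
/- Define D(X,Y) = det H(X,Y). For all unitary d×d matrices A, B and all complex d×d matrices X, Y: D(AXB, AYB) = D(X,Y). -/
open Matrix Kronecker
open scoped ComplexOrder

/-- The `d² × d²` block of `Hmat`. -/
noncomputable def hBlock {d : ℕ} (X Y : Matrix (Fin d) (Fin d) ℂ) :
    Matrix (Fin d × Fin d) (Fin d × Fin d) ℂ :=
  (Xᴴ * Y).trace • (1 : Matrix (Fin d × Fin d) (Fin d × Fin d) ℂ)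
    - (1 / 2 : ℂ) • ((Xᴴ * Y) ⊗ₖ (1 : Matrix (Fin d) (Fin d) ℂ)
      + (1 : Matrix (Fin d) (Fin d) ℂ) ⊗ₖ (Xᴴᵀ * Yᵀ))
    + (1 / 4 : ℂ) • vecMulVec (vec Xᴴᵀ) (vec Y)

lemma Hmat_apply_hBlock {d : ℕ} (X Y : Matrix (Fin d) (Fin d) ℂ) (p q : Fin 2 × Fin d × Fin d) :
    Hmat X Y p q = hBlock (![X, Y] p.1) (![X, Y] q.1) p.2 q.2 := by
  simp [Hmat, hBlock, vecCol, vecMulVec_apply, one_apply, vec]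
  split_ifs <;> ring

lemma hBlock_conj {d : ℕ} (A B : Matrix (Fin d) (Fin d) ℂ)
    (hA : Aᴴ * A = 1) (hA2 : A * Aᴴ = 1) (hB : Bᴴ * B = 1) (hB2 : B * Bᴴ = 1)
    (X Y : Matrix (Fin d) (Fin d) ℂ) :
    hBlock (A * X * B) (A * Y * B) = (Bᴴ ⊗ₖ Aᴴᵀ) * hBlock X Y * (B ⊗ₖ Aᵀ) := by
  have hAt : Aᴴᵀ * Aᵀ = 1 := by rw [← transpose_mul, hA2, transpose_one]
  have hBt : Bᴴᵀ * Bᵀ = 1 := by rw [← transpose_mul, hB2, transpose_one]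
  have e1 : (A * X * B)ᴴ * (A * Y * B) = Bᴴ * (Xᴴ * Y) * B := by
    calc _ = Bᴴ * Xᴴ * (Aᴴ * A) * Y * B := by simp only [conjTranspose_mul, Matrix.mul_assoc]
      _ = _ := by rw [hA]; simp only [Matrix.mul_one, Matrix.mul_assoc]
  have e2 : (A * X * B)ᴴᵀ * (A * Y * B)ᵀ = Aᴴᵀ * (Xᴴᵀ * Yᵀ) * Aᵀ := by
    calc _ = Aᴴᵀ * Xᴴᵀ * (Bᴴᵀ * Bᵀ) * Yᵀ * Aᵀ := by
          simp only [conjTranspose_mul, transpose_mul, Matrix.mul_assoc]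
      _ = _ := by rw [hBt]; simp only [Matrix.mul_one, Matrix.mul_assoc]
  have e3 : (Bᴴ * (Xᴴ * Y) * B).trace = (Xᴴ * Y).trace := by
    rw [Matrix.trace_mul_comm, ← Matrix.mul_assoc, hB2, Matrix.one_mul]
  have e4 : vec (A * X * B)ᴴᵀ = (Bᴴ ⊗ₖ Aᴴᵀ) *ᵥ vec Xᴴᵀ := by
    rw [kronecker_mulVec_vec]
    simp only [conjTranspose_mul, transpose_mul, Matrix.mul_assoc]
  have e5 : vec (A * Y * B) = vec Y ᵥ* (B ⊗ₖ Aᵀ) := by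
    rw [vec_vecMul_kronecker, transpose_transpose]
  unfold hBlock
  rw [e1, e2, e3, e4, e5, ← mul_vecMulVec, ← vecMulVec_mul]
  simp only [Matrix.mul_add, Matrix.add_mul, Matrix.mul_sub, Matrix.sub_mul, Matrix.mul_smul,
    Matrix.smul_mul, ← mul_kronecker_mul, Matrix.mul_one, hAt, hB, one_kronecker_one,
    Matrix.mul_assoc]

/-- `D(X,Y) = det H(X,Y)` is invariant under `X ↦ AXB`, `Y ↦ AYB` for unitary `A, B`. -/
theorem det_Hmat_unitary_invariant (d : ℕ) (A B : Matrix (Fin d) (Fin d) ℂ)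
    (hA : A ∈ Matrix.unitaryGroup (Fin d) ℂ) (hB : B ∈ Matrix.unitaryGroup (Fin d) ℂ)
    (X Y : Matrix (Fin d) (Fin d) ℂ) :
    (Hmat (A * X * B) (A * Y * B)).det = (Hmat X Y).det := by
  have hA1 : Aᴴ * A = 1 := mem_unitaryGroup_iff'.1 hA
  have hA2 : A * Aᴴ = 1 := mem_unitaryGroup_iff.1 hA
  have hB1 : Bᴴ * B = 1 := mem_unitaryGroup_iff'.1 hB
  have hB2 : B * Bᴴ = 1 := mem_unitaryGroup_iff.1 hB
  have hAt : Aᴴᵀ * Aᵀ = 1 := by rw [← transpose_mul, hA2, transpose_one]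
  have key : Hmat (A * X * B) (A * Y * B) =
      ((1 : Matrix (Fin 2) (Fin 2) ℂ) ⊗ₖ (Bᴴ ⊗ₖ Aᴴᵀ)) * Hmat X Y *
        ((1 : Matrix (Fin 2) (Fin 2) ℂ) ⊗ₖ (B ⊗ₖ Aᵀ)) := by
    ext ⟨i, a⟩ ⟨j, b⟩
    have hv : ∀ k : Fin 2, ![A * X * B, A * Y * B] k = A * ![X, Y] k * B := by
      intro k; fin_cases k <;> rfl
    rw [Hmat_apply_hBlock, hv, hv, hBlock_conj A B hA1 hA2 hB1 hB2]
    generalize hu : Bᴴ ⊗ₖ Aᴴᵀ = u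
    generalize hw : B ⊗ₖ Aᵀ = w
    symm
    rw [mul_apply, Fintype.sum_prod_type, Finset.sum_eq_single j, mul_apply]
    · refine Finset.sum_congr rfl fun c _ => ?_
      rw [mul_apply, Fintype.sum_prod_type, Finset.sum_eq_single i, mul_apply]
      · simp [Hmat_apply_hBlock, kroneckerMap_apply]
      · intro k _ hk
        simp [kroneckerMap_apply, one_apply_ne hk.symm]
      · simp
    · intro k _ hk
      simp [kroneckerMap_apply, one_apply_ne hk]
    · simp
  have huv : ((1 : Matrix (Fin 2) (Fin 2) ℂ) ⊗ₖ (Bᴴ ⊗ₖ Aᴴᵀ)) *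
      ((1 : Matrix (Fin 2) (Fin 2) ℂ) ⊗ₖ (B ⊗ₖ Aᵀ)) = 1 := by
    rw [← mul_kronecker_mul, ← mul_kronecker_mul, hB1, hAt, Matrix.mul_one, one_kronecker_one,
      one_kronecker_one]
  have hdet := congrArg Matrix.det huv
  rw [det_mul, det_one] at hdet
  rw [key, det_mul, det_mul, mul_right_comm, hdet, one_mul]
end

section
/- Let d ≥ 3. Suppose that det H(X,Y) ≠ 0 for every generic pair (X,Y) of complex d×d matrices (i.e. every pair with X, Y linearly independent over ℂ and some linear combination αX + βY nonsingular). Then H(X,Y) is positive semidefinite for all complex d×d matrices X, Y (and positive definite for every generic pair). -/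
open Matrix Kronecker
open scoped ComplexOrder

lemma posDef_of_unit {n : Type*} [Fintype n] {M : Matrix n n ℂ} (hM : M.IsHermitian)
    (h : ∀ v : EuclideanSpace ℂ n, ‖v‖ = 1 → 0 < (star v.ofLp ⬝ᵥ (M *ᵥ v.ofLp)).re) :
    M.PosDef := by
  refine Matrix.PosDef.of_dotProduct_mulVec_pos hM ?_
  intro x hx
  have hx' : (WithLp.toLp 2 x : EuclideanSpace ℂ n) ≠ 0 := by
    intro h0
    apply hx
    simpa using h0
  set y : EuclideanSpace ℂ n := WithLp.toLp 2 x with hy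
  have hpos : 0 < ‖y‖ := norm_pos_iff.2 hx'
  have h1 := h ((((‖y‖)⁻¹ : ℝ) : ℂ) • y) (by
    rw [norm_smul]; simp [hpos.ne'])
  have e : star ((((‖y‖)⁻¹ : ℝ) : ℂ) • y).ofLp ⬝ᵥ (M *ᵥ ((((‖y‖)⁻¹ : ℝ) : ℂ) • y).ofLp)
      = (((‖y‖)⁻¹ * (‖y‖)⁻¹ : ℝ) : ℂ) * (star x ⬝ᵥ (M *ᵥ x)) := by
    have : ((((‖y‖)⁻¹ : ℝ) : ℂ) • y).ofLp = (((‖y‖)⁻¹ : ℝ) : ℂ) • x := rfl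
    rw [this, star_smul, Matrix.mulVec_smul, smul_dotProduct, dotProduct_smul]
    simp [smul_eq_mul, mul_assoc]
  rw [e, Complex.re_ofReal_mul] at h1
  have h2 : 0 < (star x ⬝ᵥ (M *ᵥ x)).re := by
    by_contra hcon
    push Not at hcon
    have : 0 ≤ (‖y‖)⁻¹ * (‖y‖)⁻¹ := by positivity
    nlinarith
  rw [Complex.pos_iff]
  exact ⟨h2, (hM.im_star_dotProduct_mulVec_self x).symm⟩

lemma isClosed_posSemidef {n : Type*} [Fintype n] (M : ℂ → Matrix n n ℂ) (hc : Continuous M)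
    (hh : ∀ t, (M t).IsHermitian) : IsClosed {t | (M t).PosSemidef} := by
  have : {t | (M t).PosSemidef} = ⋂ x : n → ℂ, {t | 0 ≤ (star x ⬝ᵥ (M t *ᵥ x)).re} := by
    ext t
    simp only [Set.mem_ofPred_eq, Set.mem_iInter]
    constructor
    · intro h x
      exact (Complex.le_def.1 (h.dotProduct_mulVec_nonneg x)).1
    · intro h
      refine Matrix.PosSemidef.of_dotProduct_mulVec_nonneg (hh t) fun x => ?_
      rw [Complex.nonneg_iff]
      exact ⟨h x, ((hh t).im_star_dotProduct_mulVec_self x).symm⟩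
  rw [this]
  refine isClosed_iInter fun x => isClosed_le continuous_const ?_
  exact Complex.continuous_re.comp
    (Continuous.dotProduct continuous_const (hc.matrix_mulVec continuous_const))

lemma isClosed_bad {n : Type*} [Fintype n] (M : ℂ → Matrix n n ℂ) (hc : Continuous M) :
    IsClosed {t | ∃ v : EuclideanSpace ℂ n, ‖v‖ = 1 ∧ (star v.ofLp ⬝ᵥ (M t *ᵥ v.ofLp)).re ≤ 0} := by
  have hK : IsCompact (Metric.sphere (0 : EuclideanSpace ℂ n) 1) := isCompact_sphere _ _
  have : CompactSpace (Metric.sphere (0 : EuclideanSpace ℂ n) 1) :=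
    isCompact_iff_compactSpace.1 hK
  have hcl : IsClosed {p : Metric.sphere (0 : EuclideanSpace ℂ n) 1 × ℂ |
      (star p.1.1.ofLp ⬝ᵥ (M p.2 *ᵥ p.1.1.ofLp)).re ≤ 0} := by
    refine isClosed_le (Complex.continuous_re.comp ?_) continuous_const
    have hv : Continuous fun p : Metric.sphere (0 : EuclideanSpace ℂ n) 1 × ℂ => p.1.1.ofLp :=
      (PiLp.continuous_ofLp 2 _).comp (continuous_subtype_val.comp continuous_fst)
    exact Continuous.dotProduct hv.star ((hc.comp continuous_snd).matrix_mulVec hv)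
  have := isClosedMap_snd_of_compactSpace _ hcl
  convert this using 1
  ext t
  constructor
  · rintro ⟨v, hv, h⟩
    exact ⟨(⟨v, by simpa using hv⟩, t), h, rfl⟩
  · rintro ⟨⟨⟨v, hv⟩, t'⟩, h, rfl⟩
    exact ⟨v, by simpa using hv, h⟩

lemma posDef_of_connected {n : Type*} [Fintype n] [DecidableEq n] (M : ℂ → Matrix n n ℂ)
    (hc : Continuous M) (hh : ∀ t, (M t).IsHermitian) (S : Set ℂ) (hS : IsPreconnected S)
    (hdet : ∀ t ∈ S, (M t).det ≠ 0) {a b : ℂ} (ha : a ∈ S) (hb : b ∈ S)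
    (hpa : (M a).PosDef) : (M b).PosDef := by
  refine posDef_of_unit (hh b) ?_
  by_contra hcon
  push Not at hcon
  obtain ⟨t, htS, h1, v, hv, h2⟩ := isPreconnected_closed_iff.1 hS _ _
    (isClosed_posSemidef M hc hh) (isClosed_bad M hc) (by
      intro t _
      by_cases hp : (M t).PosDef
      · exact Or.inl hp.posSemidef
      · right
        by_contra hn
        apply hp
        refine posDef_of_unit (hh t) fun v hv => ?_
        by_contra hle
        exact hn ⟨v, hv, not_lt.1 hle⟩) ⟨a, ha, hpa.posSemidef⟩ ⟨b, hb, hcon⟩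
  have hpd := (Matrix.PosSemidef.posDef_iff_det_ne_zero h1).2 (hdet t htS)
  have hv0 : v.ofLp ≠ 0 := by
    intro h0
    have : v = 0 := by
      ext i
      simpa using congrFun h0 i
    simp [this] at hv
  have := (Complex.pos_iff.1 (hpd.dotProduct_mulVec_pos hv0)).1
  linarith

/-- Generic pairs. -/
def GenPair {d : ℕ} (X Y : Matrix (Fin d) (Fin d) ℂ) : Prop :=
  LinearIndependent ℂ ![X, Y] ∧ ∃ α β : ℂ, (α • X + β • Y).det ≠ 0

lemma linInd_of_minor {d : ℕ} {X Y : Matrix (Fin d) (Fin d) ℂ} {i j k l : Fin d}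
    (h : X i j * Y k l - X k l * Y i j ≠ 0) : LinearIndependent ℂ ![X, Y] := by
  rw [LinearIndependent.pair_iff]
  intro s t hst
  have e1 := congrFun (congrFun hst i) j
  have e2 := congrFun (congrFun hst k) l
  simp only [Matrix.add_apply, Matrix.smul_apply, smul_eq_mul, Matrix.zero_apply] at e1 e2
  have hs : s * (X i j * Y k l - X k l * Y i j) = 0 := by
    linear_combination Y k l * e1 - Y i j * e2
  have ht : t * (X i j * Y k l - X k l * Y i j) = 0 := by
    linear_combination X i j * e2 - X k l * e1
  exact ⟨(mul_eq_zero.1 hs).resolve_right h, (mul_eq_zero.1 ht).resolve_right h⟩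

lemma minor_of_linInd {d : ℕ} {X Y : Matrix (Fin d) (Fin d) ℂ}
    (h : LinearIndependent ℂ ![X, Y]) :
    ∃ i j k l : Fin d, X i j * Y k l - X k l * Y i j ≠ 0 := by
  by_contra hcon
  push Not at hcon
  have hX : X ≠ 0 := by simpa using h.ne_zero 0
  have : ∃ i j, X i j ≠ 0 := by
    by_contra hz
    push Not at hz
    exact hX (by ext i j; simpa using hz i j)
  obtain ⟨i, j, hij⟩ := this
  refine (LinearIndependent.pair_iff' hX).1 h (Y i j / X i j) ?_
  ext k l
  have := hcon i j k l
  simp only [Matrix.smul_apply, smul_eq_mul]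
  field_simp
  linear_combination -this

open Polynomial in
lemma exists_poly {d : ℕ} (A B X Y : Matrix (Fin d) (Fin d) ℂ) (t₀ : ℂ)
    (h : GenPair (A + t₀ • X) (B + t₀ • Y)) :
    ∃ p : ℂ[X], p.eval t₀ ≠ 0 ∧ ∀ t, p.eval t ≠ 0 → GenPair (A + t • X) (B + t • Y) := by
  obtain ⟨hl, α, β, hdet⟩ := h
  obtain ⟨i, j, k, l, hm⟩ := minor_of_linInd hl
  let P : Matrix (Fin d) (Fin d) ℂ[X] := Matrix.of fun r s =>
    C α * (C (A r s) + Polynomial.X * C (X r s)) + C β * (C (B r s) + Polynomial.X * C (Y r s))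
  let m : ℂ[X] := (C (A i j) + Polynomial.X * C (X i j)) * (C (B k l) + Polynomial.X * C (Y k l))
    - (C (A k l) + Polynomial.X * C (X k l)) * (C (B i j) + Polynomial.X * C (Y i j))
  have hP : ∀ t, P.det.eval t = (α • (A + t • X) + β • (B + t • Y)).det := by
    intro t
    have := (Polynomial.evalRingHom t).map_det P
    rw [Polynomial.coe_evalRingHom] at this
    rw [this]
    congr 1
    ext r s
    simp [P]
    ring
  have hmv : ∀ t, m.eval t = (A + t • X) i j * (B + t • Y) k l - (A + t • X) k l * (B + t • Y) i j := by
    intro t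
    simp [m]
    ring
  refine ⟨P.det * m, ?_, ?_⟩
  · rw [eval_mul, hP, hmv]
    exact mul_ne_zero hdet hm
  · intro t ht
    rw [eval_mul, hP, hmv] at ht
    exact ⟨linInd_of_minor (right_ne_zero_of_mul ht), α, β, left_ne_zero_of_mul ht⟩

lemma Hmat_isHermitian {d : ℕ} (X Y : Matrix (Fin d) (Fin d) ℂ) : (Hmat X Y).IsHermitian := by
  ext p q
  rw [Matrix.conjTranspose_apply]
  simp only [Hmat, Matrix.of_apply]
  generalize ![X, Y] p.1 = P
  generalize ![X, Y] q.1 = Q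
  simp only [Matrix.trace, Matrix.diag, Matrix.mul_apply, Matrix.conjTranspose_apply,
    Matrix.transpose_apply, star_add, star_sub, star_mul', star_sum, star_star, apply_ite star,
    star_one, star_zero, eq_comm (a := q.2), eq_comm (a := q.2.1), eq_comm (a := q.2.2),
    starRingEnd_apply]
  simp only [mul_comm, star_div₀, star_one, star_ofNat]
  try ring

lemma Hmat_continuous {d : ℕ} (A B X Y : Matrix (Fin d) (Fin d) ℂ) :
    Continuous fun t : ℂ => Hmat (A + t • X) (B + t • Y) := by
  refine continuous_matrix fun p q => ?_
  have hz : ∀ i : Fin 2, Continuous fun t : ℂ => ![A + t • X, B + t • Y] i := by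
    intro i
    fin_cases i
    · simp; fun_prop
    · simp; fun_prop
  have hp := hz p.1
  have hq := hz q.1
  simp only [Hmat, Matrix.of_apply, vecCol]
  have h1 := (hp.matrix_conjTranspose.matrix_mul hq)
  have h2 := (hp.matrix_conjTranspose.matrix_transpose.matrix_mul hq.matrix_transpose)
  have h3 := h1.matrix_trace
  have h4 := h1.matrix_elem p.2.1 q.2.1
  have h5 := h2.matrix_elem p.2.2 q.2.2
  have h6 := hp.matrix_elem p.2.2 p.2.1
  have h7 := hq.matrix_elem q.2.2 q.2.1
  have h8 := Complex.continuous_conj.comp h6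
  refine ((h3.mul continuous_const).sub (continuous_const.mul
    ((h4.mul continuous_const).add (continuous_const.mul h5)))).add
      (continuous_const.mul (h8.mul h7))

/-- Diagonals of the base pair. -/
def bx {d : ℕ} (i : Fin 2) (k : Fin d) : ℂ :=
  if i = 0 then (if k.val = 1 then 0 else 1) else (if k.val = 0 then 0 else 1)

lemma base_gen {d : ℕ} (hd : 3 ≤ d) :
    GenPair (d := d) (Matrix.diagonal (bx 0)) (Matrix.diagonal (bx 1)) := by
  refine ⟨linInd_of_minor (i := ⟨0, by omega⟩) (j := ⟨0, by omega⟩) (k := ⟨1, by omega⟩)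
    (l := ⟨1, by omega⟩) (by simp [bx]), 1, 1, ?_⟩
  rw [one_smul, one_smul, Matrix.diagonal_add, Matrix.det_diagonal, Finset.prod_ne_zero_iff]
  intro k _
  simp only [bx]
  split_ifs <;> first | (exfalso; omega) | norm_num

/-- Weights of the base form. -/
noncomputable def bw {d : ℕ} (a b k : Fin d) : ℝ :=
  1 - (if k = a then 1/2 else 0) - (if k = b then 1/2 else 0)

lemma bw_nonneg {d : ℕ} (a b k : Fin d) : 0 ≤ bw a b k := by
  unfold bw; split_ifs <;> norm_num

lemma bw_pos {d : ℕ} (a b k : Fin d) (h : ¬ (k = a ∧ k = b)) : 0 < bw a b k := by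
  unfold bw; split_ifs <;> first | (exfalso; tauto) | norm_num

lemma base_entry {d : ℕ} (p q : Fin 2 × Fin d × Fin d) :
    Hmat (Matrix.diagonal (bx 0)) (Matrix.diagonal (bx 1)) p q =
      (if p.2 = q.2 then ∑ k, (bw p.2.1 p.2.2 k : ℂ) * (star (bx p.1 k) * bx q.1 k) else 0)
      + (1/4) * (star (if p.2.1 = p.2.2 then bx p.1 p.2.1 else 0) *
          (if q.2.1 = q.2.2 then bx q.1 q.2.1 else 0)) := by
  obtain ⟨i, a, b⟩ := p
  obtain ⟨j, a', b'⟩ := q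
  have hZ : ∀ i : Fin 2, ![Matrix.diagonal (bx (d := d) 0), Matrix.diagonal (bx 1)] i
      = Matrix.diagonal (bx i) := by
    intro i; fin_cases i <;> rfl
  simp only [Hmat, Matrix.of_apply, vecCol, hZ, Matrix.diagonal_conjTranspose,
    Matrix.diagonal_transpose, Matrix.diagonal_mul_diagonal, Matrix.trace_diagonal,
    Matrix.diagonal_apply, starRingEnd_apply, Pi.star_apply, Prod.mk.injEq]
  congr 1
  · have hs : ∑ k, (bw a b k : ℂ) * (star (bx i k) * bx j k) =
        (∑ k : Fin d, star (bx i k) * bx j k) - (1/2) * (star (bx i a) * bx j a)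
          - (1/2) * (star (bx i b) * bx j b) := by
      simp only [bw]
      push_cast
      simp only [sub_mul, Finset.sum_sub_distrib, one_mul]
      congr 1
      · congr 1
        rw [Finset.sum_eq_single a] <;> simp +contextual
      · rw [Finset.sum_eq_single b] <;> simp +contextual
    rw [hs]
    by_cases h1 : a = a' <;> by_cases h2 : b = b' <;> simp [h1, h2]
    ring
  · by_cases h1 : a = b <;> by_cases h2 : a' = b' <;> simp [h1, h2, Ne.symm]

lemma base_form {d : ℕ} (v : Fin 2 × Fin d × Fin d → ℂ) :
    (star v ⬝ᵥ (Hmat (Matrix.diagonal (bx 0)) (Matrix.diagonal (bx 1)) *ᵥ v)) =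
      ((∑ c : Fin d × Fin d, ∑ k, bw c.1 c.2 k * Complex.normSq (∑ j, bx j k * v (j, c))
      + (1/4) * Complex.normSq
        (∑ q : Fin 2 × Fin d × Fin d, (if q.2.1 = q.2.2 then bx q.1 q.2.1 else 0) * v q) : ℝ) : ℂ) := by
  push_cast
  simp only [← Complex.mul_conj, dotProduct, Matrix.mulVec, base_entry, add_mul,
    Finset.sum_add_distrib, mul_add, Pi.star_apply]
  congr 1
  · rw [Fintype.sum_prod_type_right]
    refine Finset.sum_congr rfl fun c _ => ?_
    have inner : ∀ i : Fin 2, ∑ q : Fin 2 × Fin d × Fin d,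
        (if c = q.2 then ∑ k, (bw c.1 c.2 k : ℂ) * (star (bx i k) * bx q.1 k) else 0) * v q
        = ∑ j, (∑ k, (bw c.1 c.2 k : ℂ) * (star (bx i k) * bx j k)) * v (j, c) := by
      intro i
      rw [Fintype.sum_prod_type_right, Finset.sum_eq_single c]
      · simp
      · intro c' _ hc'
        simp [hc'.symm]
      · simp
    simp only [inner]
    simp only [Fin.sum_univ_two, Finset.sum_mul, Finset.mul_sum, ← Finset.sum_add_distrib]
    refine Finset.sum_congr rfl fun k _ => ?_
    simp only [map_add, map_mul, starRingEnd_apply]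
    ring
  · rw [map_sum, mul_comm (∑ q, _ * v q), Finset.sum_mul_sum, Finset.mul_sum]
    refine Finset.sum_congr rfl fun p _ => ?_
    rw [Finset.mul_sum, Finset.mul_sum]
    refine Finset.sum_congr rfl fun q _ => ?_
    simp only [map_mul, starRingEnd_apply]
    ring

lemma base_posDef {d : ℕ} (hd : 3 ≤ d) :
    (Hmat (d := d) (Matrix.diagonal (bx 0)) (Matrix.diagonal (bx 1))).PosDef := by
  refine Matrix.PosDef.of_dotProduct_mulVec_pos (Hmat_isHermitian _ _) fun v hv => ?_
  rw [base_form]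
  rw [← Complex.ofReal_zero, Complex.real_lt_real]
  have hnn : ∀ c : Fin d × Fin d, ∀ k, 0 ≤ bw c.1 c.2 k * Complex.normSq (∑ j, bx j k * v (j, c)) :=
    fun c k => mul_nonneg (bw_nonneg _ _ _) (Complex.normSq_nonneg _)
  refine add_pos_of_pos_of_nonneg ?_ (mul_nonneg (by norm_num) (Complex.normSq_nonneg _))
  by_contra hcon
  apply hv
  have h0 := le_antisymm (not_lt.1 hcon)
    (Finset.sum_nonneg fun c _ => Finset.sum_nonneg fun k _ => hnn c k)
  rw [Finset.sum_eq_zero_iff_of_nonneg (fun c _ => Finset.sum_nonneg fun k _ => hnn c k)] at h0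
  have key : ∀ (c : Fin d × Fin d) (k : Fin d), ¬ (k = c.1 ∧ k = c.2) →
      bx 0 k * v (0, c) + bx 1 k * v (1, c) = 0 := by
    intro c k hk
    have h1 := h0 c (Finset.mem_univ _)
    rw [Finset.sum_eq_zero_iff_of_nonneg (fun k _ => hnn c k)] at h1
    have h2 := (mul_eq_zero.1 (h1 k (Finset.mem_univ _))).resolve_left (bw_pos _ _ _ hk).ne'
    simpa [Fin.sum_univ_two] using Complex.normSq_eq_zero.1 h2
  have e0 := fun c => key c ⟨0, by omega⟩
  have e1 := fun c => key c ⟨1, by omega⟩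
  have e2 := fun c => key c ⟨2, by omega⟩
  have hb : ∀ c, v (0, c) = 0 ∧ v (1, c) = 0 := by
    rintro ⟨a, b⟩
    have e0 := e0 (a, b)
    have e1 := e1 (a, b)
    have e2 := e2 (a, b)
    simp only [bx, Fin.ext_iff] at e0 e1 e2
    norm_num at e0 e1 e2
    by_cases ha0 : a.val = 0
    · have f1 := e1 (by omega)
      have f2 := e2 (by omega)
      exact ⟨by simpa [f1] using f2, f1⟩
    · have f0 := e0 (by omega)
      by_cases ha1 : a.val = 1
      · have f2 := e2 (by omega)
        exact ⟨f0, by simpa [f0] using f2⟩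
      · exact ⟨f0, e1 (by omega)⟩
  ext ⟨i, c⟩
  fin_cases i
  · exact (hb c).1
  · exact (hb c).2

/-- Let `d ≥ 3`. If `det H(X,Y) ≠ 0` for every generic pair `(X,Y)` (i.e. `X, Y` linearly
independent with some linear combination nonsingular), then `H(X,Y)` is positive
semidefinite for all `X, Y`, and positive definite for every generic pair. -/
theorem Hmat_posSemidef_of_det_ne_zero_on_generic (d : ℕ) (hd : 3 ≤ d)
    (hgen : ∀ X Y : Matrix (Fin d) (Fin d) ℂ,
      (LinearIndependent ℂ ![X, Y] ∧ ∃ α β : ℂ, (α • X + β • Y).det ≠ 0) →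
        (Hmat X Y).det ≠ 0) :
    (∀ X Y : Matrix (Fin d) (Fin d) ℂ, (Hmat X Y).PosSemidef) ∧
    (∀ X Y : Matrix (Fin d) (Fin d) ℂ,
      (LinearIndependent ℂ ![X, Y] ∧ ∃ α β : ℂ, (α • X + β • Y).det ≠ 0) →
        (Hmat X Y).PosDef) := by
  set A : Matrix (Fin d) (Fin d) ℂ := Matrix.diagonal (bx 0) with hA
  set B : Matrix (Fin d) (Fin d) ℂ := Matrix.diagonal (bx 1) with hB
  have hAB : GenPair A B := base_gen hd
  have hpAB : (Hmat A B).PosDef := base_posDef hd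
  have hrank : 1 < Module.rank ℝ ℂ := by rw [Complex.rank_real_complex]; norm_num
  have hPD : ∀ X Y : Matrix (Fin d) (Fin d) ℂ, GenPair X Y → (Hmat X Y).PosDef := by
    intro X Y hXY
    obtain ⟨p, hp0, hp⟩ := exists_poly A B (X - A) (Y - B) 0 (by simpa using hAB)
    obtain ⟨q, hq1, hq⟩ := exists_poly A B (X - A) (Y - B) 1 (by simpa using hXY)
    have hpq : p * q ≠ 0 := by
      refine mul_ne_zero ?_ ?_
      · rintro rfl; simp at hp0
      · rintro rfl; simp at hq1
    have hfin : {t : ℂ | (p * q).eval t = 0 ∧ t ≠ 0 ∧ t ≠ 1}.Countable := by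
      refine Set.Finite.countable (((p * q).roots.toFinset.finite_toSet).subset ?_)
      rintro t ⟨ht, -⟩
      simp only [Finset.mem_coe, Multiset.mem_toFinset]
      exact (Polynomial.mem_roots hpq).2 ht
    have hconn := (hfin.isConnected_compl_of_one_lt_rank hrank).isPreconnected
    have := posDef_of_connected (fun t : ℂ => Hmat (A + t • (X - A)) (B + t • (Y - B)))
      (Hmat_continuous _ _ _ _) (fun t => Hmat_isHermitian _ _) _ hconn (by
        intro t ht
        apply hgen
        change GenPair _ _
        by_cases h0 : t = 0
        · subst h0; simpa using hAB
        by_cases h1 : t = 1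
        · subst h1; simpa using hXY
        apply hp
        intro hpt
        exact ht ⟨by simp [hpt], h0, h1⟩) (a := 0) (b := 1) (by simp) (by simp) (by simpa using hpAB)
    simpa using this
  refine ⟨?_, hPD⟩
  intro X Y
  obtain ⟨p, hp0, hp⟩ := exists_poly A B (X - A) (Y - B) 0 (by simpa using hAB)
  have hpn : p ≠ 0 := by rintro rfl; simp at hp0
  have hfin : {t : ℂ | p.eval t = 0}.Countable := by
    refine Set.Finite.countable ((p.roots.toFinset.finite_toSet).subset ?_)
    intro t ht
    simp only [Finset.mem_coe, Multiset.mem_toFinset]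
    exact (Polynomial.mem_roots hpn).2 ht
  have hdense := hfin.dense_compl ℝ
  have hcl := isClosed_posSemidef (fun t : ℂ => Hmat (A + t • (X - A)) (B + t • (Y - B)))
      (Hmat_continuous _ _ _ _) (fun t => Hmat_isHermitian _ _)
  have hsub : {t : ℂ | p.eval t = 0}ᶜ ⊆
      {t : ℂ | (Hmat (A + t • (X - A)) (B + t • (Y - B))).PosSemidef} :=
    fun t ht => (hPD _ _ (hp t ht)).posSemidef
  have h1 := closure_minimal hsub hcl (hdense (1 : ℂ))
  simpa using h1
end

section
/- For every complex d×d matrix X, the d²×d² hermitian matrix ‖X‖² I_{d²} − (1/2)(X†X ⊗ I_d) − (1/2)(I_d ⊗ X*Xᵀ) + (1/4) vec(X)* vec(X)ᵀ is positive semidefinite, where vec(X) ∈ ℂ^{d²} is the column vector obtained by stacking the columns of X and X* is the entrywise complex conjugate. (This matrix is a diagonal d²×d² block of H(X,Y); equivalently, Φ(X,Y,U,0) ≥ 0 for all U.) -/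
open Matrix Kronecker
open scoped ComplexOrder

/-- Squared Frobenius norm `‖M‖² = tr(M†M)` (a real number). -/
noncomputable def frob2 {n : Type*} [Fintype n] (M : Matrix n n ℂ) : ℝ :=
  ((Mᴴ * M).trace).re

theorem trace_smul_one_sub_posSemidef {n : Type*} [Fintype n] [DecidableEq n] {A : Matrix n n ℂ}
    (hA : A.PosSemidef) : (A.trace • (1 : Matrix n n ℂ) - A).PosSemidef := by
  have hH := hA.isHermitian
  have hd : (diagonal (fun i => A.trace - (hH.eigenvalues i : ℂ)) : Matrix n n ℂ).PosSemidef := by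
    rw [posSemidef_diagonal_iff]
    intro i
    rw [hH.trace_eq_sum_eigenvalues, sub_nonneg]
    have h : hH.eigenvalues i ≤ ∑ j, hH.eigenvalues j :=
      Finset.single_le_sum (fun j _ => hA.eigenvalues_nonneg j) (Finset.mem_univ i)
    have h' := Complex.real_le_real.mpr h
    rw [Complex.ofReal_sum] at h'
    exact h'
  have h2 := hd.mul_mul_conjTranspose_same (hH.eigenvectorUnitary : Matrix n n ℂ)
  convert h2 using 1
  have hU : (hH.eigenvectorUnitary : Matrix n n ℂ) * (hH.eigenvectorUnitary : Matrix n n ℂ)ᴴ = 1 :=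
    Unitary.coe_mul_star_self hH.eigenvectorUnitary
  have hs := hH.spectral_theorem
  rw [Unitary.conjStarAlgAut_apply] at hs
  have hdd : (diagonal (fun i => A.trace - (hH.eigenvalues i : ℂ)) : Matrix n n ℂ)
      = A.trace • (1 : Matrix n n ℂ) - diagonal (RCLike.ofReal ∘ hH.eigenvalues) := by
    ext i j
    by_cases h : i = j
    · subst h; simp
    · simp [h]
  rw [hdd, mul_sub, sub_mul, mul_smul_comm, smul_mul_assoc, mul_one, hU]
  congr 1

/-- For every `X`, the `d²×d²` hermitian matrix
`‖X‖² I - ½(X†X ⊗ I_d) - ½(I_d ⊗ X*Xᵀ) + ¼ vec(X)* vec(X)ᵀ` is positive semidefinite. -/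
theorem diagonal_block_posSemidef (d : ℕ) (X : Matrix (Fin d) (Fin d) ℂ) :
    (((frob2 X : ℂ)) • (1 : Matrix (Fin d × Fin d) (Fin d × Fin d) ℂ)
      - (1 / 2 : ℂ) • ((Xᴴ * X) ⊗ₖ (1 : Matrix (Fin d) (Fin d) ℂ))
      - (1 / 2 : ℂ) • ((1 : Matrix (Fin d) (Fin d) ℂ) ⊗ₖ (Xᴴᵀ * Xᵀ))
      + (1 / 4 : ℂ) • vecMulVec (star (vecCol X)) (vecCol X)).PosSemidef := by
  have hA : (Xᴴ * X).PosSemidef := posSemidef_conjTranspose_mul_self X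
  have hB : (Xᴴᵀ * Xᵀ).PosSemidef := by
    have h := posSemidef_conjTranspose_mul_self Xᵀ
    exact h
  have htA : (Xᴴ * X).trace = (frob2 X : ℂ) := by
    have h := hA.trace_nonneg
    rw [Complex.nonneg_iff] at h
    apply Complex.ext
    · simp [frob2]
    · simp [← h.2]
  have htB : (Xᴴᵀ * Xᵀ).trace = (frob2 X : ℂ) := by
    rw [← htA, ← transpose_mul, trace_transpose, trace_mul_comm]
  have h1 := trace_smul_one_sub_posSemidef hA
  have h2 := trace_smul_one_sub_posSemidef hB
  rw [htA] at h1
  rw [htB] at h2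
  have h3 := h1.kronecker (PosSemidef.one (n := Fin d) (R := ℂ))
  have h4 := (PosSemidef.one (n := Fin d) (R := ℂ)).kronecker h2
  have h5 := posSemidef_vecMulVec_star_self (vecCol X)
  have hhalf : (0 : ℂ) ≤ 1 / 2 := by
    rw [Complex.nonneg_iff]; norm_num
  have hq : (0 : ℂ) ≤ 1 / 4 := by
    rw [Complex.nonneg_iff]; norm_num
  have h6 := ((h3.smul hhalf).add (h4.smul hhalf)).add (h5.smul hq)
  have e1 : ((frob2 X : ℂ) • (1 : Matrix (Fin d) (Fin d) ℂ) - Xᴴ * X) ⊗ₖ (1 : Matrix (Fin d) (Fin d) ℂ)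
      = (frob2 X : ℂ) • (1 : Matrix (Fin d × Fin d) (Fin d × Fin d) ℂ) - (Xᴴ * X) ⊗ₖ 1 := by
    rw [← one_kronecker_one, ← smul_kronecker]
    ext i j
    simp [kroneckerMap_apply, sub_mul]
  have e2 : (1 : Matrix (Fin d) (Fin d) ℂ) ⊗ₖ ((frob2 X : ℂ) • (1 : Matrix (Fin d) (Fin d) ℂ) - Xᴴᵀ * Xᵀ)
      = (frob2 X : ℂ) • (1 : Matrix (Fin d × Fin d) (Fin d × Fin d) ℂ) - 1 ⊗ₖ (Xᴴᵀ * Xᵀ) := by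
    rw [← one_kronecker_one, ← kronecker_smul]
    ext i j
    simp only [kroneckerMap_apply, Matrix.sub_apply, mul_sub]
  rw [e1, e2] at h6
  have e3 : ∀ I P Q V : Matrix (Fin d × Fin d) (Fin d × Fin d) ℂ,
      (1 / 2 : ℂ) • ((frob2 X : ℂ) • I - P) + (1 / 2 : ℂ) • ((frob2 X : ℂ) • I - Q) + (1 / 4 : ℂ) • V
      = (frob2 X : ℂ) • I - (1 / 2 : ℂ) • P - (1 / 2 : ℂ) • Q + (1 / 4 : ℂ) • V := by
    intro I P Q V
    module
  rw [e3] at h6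
  exact h6
end
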